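/- Consider the Abel differential equation dr/dθ = Ã₁(θ) r² + Ã₂(θ) r³, where Ã₁ and Ã₂ are continuous 2π-periodic real functions. If there exists a continuously differentiable 2π-periodic function u : ℝ → ℝ and continuous functions Â₁, Â₂ : ℝ → ℝ such that Ã₁(θ) = u'(θ) Â₁(u(θ)) and Ã₂(θ) = u'(θ) Â₂(u(θ)) for all θ, then the equation has a center at r = 0, i.e. every solution r(θ) with |r(0)| sufficiently small is defined on [0, 2π] and satisfies r(2π) = r(0). -/

import Mathlib

open Real

/-- A 2π-periodic scalar ODE `dr/dθ = F θ r` has a center at `r = 0` if every solution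
with `|r 0|` sufficiently small is defined on `[0, 2π]` and satisfies `r (2π) = r 0`. -/
def HasCenterAtZero (F : ℝ → ℝ → ℝ) : Prop :=
  ∃ ε > (0 : ℝ), ∀ r : ℝ → ℝ, |r 0| < ε →
    (∀ θ ∈ Set.Icc (0 : ℝ) (2 * Real.pi), HasDerivAt r (F θ (r θ)) θ) →
    r (2 * Real.pi) = r 0

/-- Uniqueness for the Abel equation on `[0, b]`. -/
lemma abel_unique (A1 A2 : ℝ → ℝ) (hA1c : Continuous A1) (hA2c : Continuous A2)
    (b : ℝ) (r s : ℝ → ℝ)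
    (hr : ∀ θ ∈ Set.Icc (0 : ℝ) b, HasDerivAt r (A1 θ * r θ ^ 2 + A2 θ * r θ ^ 3) θ)
    (hs : ∀ θ ∈ Set.Icc (0 : ℝ) b, HasDerivAt s (A1 θ * s θ ^ 2 + A2 θ * s θ ^ 3) θ)
    (h0 : r 0 = s 0) : ∀ θ ∈ Set.Icc (0 : ℝ) b, r θ = s θ := by
  have hrc : ContinuousOn r (Set.Icc 0 b) :=
    fun x hx => (hr x hx).continuousAt.continuousWithinAt
  have hsc : ContinuousOn s (Set.Icc 0 b) :=
    fun x hx => (hs x hx).continuousAt.continuousWithinAt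
  have hgc : ContinuousOn (fun θ => A1 θ * (r θ + s θ)
      + A2 θ * (r θ ^ 2 + r θ * s θ + s θ ^ 2)) (Set.Icc 0 b) :=
    (hA1c.continuousOn.mul (hrc.add hsc)).add
      (hA2c.continuousOn.mul (((hrc.pow 2).add (hrc.mul hsc)).add (hsc.pow 2)))
  obtain ⟨K, hK⟩ := isCompact_Icc.exists_bound_of_continuousOn hgc
  intro θ hθ
  have key := eq_zero_of_abs_deriv_le_mul_abs_self_of_eq_zero_right
    (f := fun θ => r θ - s θ) (a := 0) (b := b) (K := K)
    (f' := fun θ => (A1 θ * r θ ^ 2 + A2 θ * r θ ^ 3) - (A1 θ * s θ ^ 2 + A2 θ * s θ ^ 3))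
    (hrc.sub hsc)
    (fun x hx => ((hr x (Set.Ico_subset_Icc_self hx)).sub
      (hs x (Set.Ico_subset_Icc_self hx))).hasDerivWithinAt)
    (by simp [h0]) ?_ θ hθ
  · exact sub_eq_zero.mp key
  · intro x hx
    have h := hK x (Set.Ico_subset_Icc_self hx)
    have e : (A1 x * r x ^ 2 + A2 x * r x ^ 3) - (A1 x * s x ^ 2 + A2 x * s x ^ 3)
        = (A1 x * (r x + s x) + A2 x * (r x ^ 2 + r x * s x + s x ^ 2)) * (r x - s x) := by
      ring
    rw [e, norm_mul]
    exact mul_le_mul_of_nonneg_right h (norm_nonneg _)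

/-- Solutions of the Abel equation with small initial value exist on any prescribed
interval `(t - T, t + T)`. -/
lemma abel_exists (B1 B2 : ℝ → ℝ) (hB1 : Continuous B1) (hB2 : Continuous B2)
    (t T : ℝ) (hT : 0 < T) :
    ∃ ε > (0 : ℝ), ∀ ρ : ℝ, |ρ| < ε → ∃ R : ℝ → ℝ, R t = ρ ∧
      ∀ v ∈ Set.Ioo (t - T) (t + T), HasDerivAt R (B1 v * R v ^ 2 + B2 v * R v ^ 3) v := by
  obtain ⟨C1, hC1⟩ := (isCompact_Icc (a := t - T) (b := t + T)).exists_bound_of_continuousOn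
    hB1.continuousOn
  obtain ⟨C2, hC2⟩ := (isCompact_Icc (a := t - T) (b := t + T)).exists_bound_of_continuousOn
    hB2.continuousOn
  obtain ⟨C, hCpos, hCC1, hCC2⟩ : ∃ C : ℝ, 0 < C ∧ C1 ≤ C ∧ C2 ≤ C :=
    ⟨max 1 (max C1 C2), by positivity, by simp, by simp⟩
  have hD : 0 < 1 + 4 * C * T := by positivity
  obtain ⟨a, ha, ha1, haD⟩ : ∃ a : ℝ, 0 < a ∧ a ≤ 1 ∧ 4 * C * T * a ≤ 1 := by
    have hCT : 0 < 4 * C * T := by positivity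
    refine ⟨1 / (1 + 4 * C * T), by positivity, ?_, ?_⟩
    · rw [div_le_one hD]; linarith
    · rw [mul_one_div, div_le_one hD]; linarith
  have htmem : t ∈ Set.Icc (t - T) (t + T) := ⟨by linarith, by linarith⟩
  have hPL : IsPicardLindelof (fun v x => B1 v * x ^ 2 + B2 v * x ^ 3)
      (⟨t, htmem⟩ : Set.Icc (t - T) (t + T)) (0 : ℝ)
      (⟨a, ha.le⟩ : NNReal) (⟨a / 2, by positivity⟩ : NNReal)
      (⟨2 * C * a ^ 2, by positivity⟩ : NNReal) (⟨5 * C, by positivity⟩ : NNReal) := by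
    refine ⟨?_, ?_, ?_, ?_⟩
    · intro v hv
      refine LipschitzOnWith.of_dist_le_mul ?_
      intro x hx y hy
      have hx' : |x| ≤ a := mem_closedBall_zero_iff.mp hx
      have hy' : |y| ≤ a := mem_closedBall_zero_iff.mp hy
      have b1 : |B1 v| ≤ C := (hC1 v hv).trans hCC1
      have b2 : |B2 v| ≤ C := (hC2 v hv).trans hCC2
      have e : B1 v * x ^ 2 + B2 v * x ^ 3 - (B1 v * y ^ 2 + B2 v * y ^ 3)
        = (B1 v * (x + y) + B2 v * (x ^ 2 + x * y + y ^ 2)) * (x - y) := by ring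
      rw [Real.dist_eq, Real.dist_eq, e, abs_mul]
      refine mul_le_mul_of_nonneg_right ?_ (abs_nonneg _)
      change _ ≤ 5 * C
      have hx1 : |x| ≤ 1 := hx'.trans ha1
      have hy1 : |y| ≤ 1 := hy'.trans ha1
      have s1 : |x + y| ≤ 2 := (abs_add_le x y).trans (by linarith)
      have s2 : |x ^ 2 + x * y + y ^ 2| ≤ 3 := by
        rw [abs_le] at hx1 hy1 ⊢
        constructor <;> nlinarith [sq_nonneg (x + y), sq_nonneg (x - y)]
      calc |B1 v * (x + y) + B2 v * (x ^ 2 + x * y + y ^ 2)|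
          ≤ |B1 v| * |x + y| + |B2 v| * |x ^ 2 + x * y + y ^ 2| := by
            rw [← abs_mul, ← abs_mul]; exact abs_add_le _ _
        _ ≤ C * 2 + C * 3 := by gcongr
        _ = 5 * C := by ring
    · intro x _
      exact (by fun_prop : Continuous fun v => B1 v * x ^ 2 + B2 v * x ^ 3).continuousOn
    · intro v hv x hx
      have hx' : |x| ≤ a := mem_closedBall_zero_iff.mp hx
      have b1 : |B1 v| ≤ C := (hC1 v hv).trans hCC1
      have b2 : |B2 v| ≤ C := (hC2 v hv).trans hCC2
      change |B1 v * x ^ 2 + B2 v * x ^ 3| ≤ 2 * C * a ^ 2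
      calc |B1 v * x ^ 2 + B2 v * x ^ 3|
          ≤ |B1 v| * |x| ^ 2 + |B2 v| * |x| ^ 3 := by
            rw [← abs_pow, ← abs_pow, ← abs_mul, ← abs_mul]; exact abs_add_le _ _
        _ ≤ C * a ^ 2 + C * a ^ 3 := by gcongr
        _ ≤ C * a ^ 2 + C * a ^ 2 := by
            have : a ^ 3 ≤ a ^ 2 := pow_le_pow_of_le_one ha.le ha1 (by norm_num)
            gcongr
        _ = 2 * C * a ^ 2 := by ring
    · change 2 * C * a ^ 2 * max (t + T - t) (t - (t - T)) ≤ a - a / 2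
      have e : max (t + T - t) (t - (t - T)) = T := by
        rw [add_sub_cancel_left, sub_sub_cancel, max_self]
      rw [e]
      nlinarith [mul_le_mul_of_nonneg_left haD ha.le]
  refine ⟨a / 2, by positivity, fun ρ hρ => ?_⟩
  have hmem : ρ ∈ Metric.closedBall (0 : ℝ) ((⟨a / 2, by positivity⟩ : NNReal) : ℝ) := by
    rw [mem_closedBall_zero_iff]
    exact hρ.le
  obtain ⟨R, hR0, hR⟩ := hPL.exists_eq_forall_mem_Icc_hasDerivWithinAt hmem
  exact ⟨R, hR0, fun v hv =>
    (hR v (Set.Ioo_subset_Icc_self hv)).hasDerivAt (Icc_mem_nhds hv.1 hv.2)⟩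

/-- The existence half of the center property: under the Composition Condition, for every small
initial value there is a solution on `[0, 2π]`, and it takes the same value at `0` and `2π`. -/
theorem abel_composition_condition_exists
    (A1 A2 : ℝ → ℝ)
    (u du : ℝ → ℝ) (hu : ∀ θ, HasDerivAt u (du θ) θ)
    (hup : Function.Periodic u (2 * Real.pi))
    (Ah1 Ah2 : ℝ → ℝ) (hAh1 : Continuous Ah1) (hAh2 : Continuous Ah2)
    (h1 : ∀ θ, A1 θ = du θ * Ah1 (u θ)) (h2 : ∀ θ, A2 θ = du θ * Ah2 (u θ)) :
    ∃ ε > (0 : ℝ), ∀ ρ : ℝ, |ρ| < ε → ∃ s : ℝ → ℝ, s 0 = ρ ∧ s (2 * Real.pi) = ρ ∧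
      ∀ θ ∈ Set.Icc (0 : ℝ) (2 * Real.pi),
        HasDerivAt s (A1 θ * s θ ^ 2 + A2 θ * s θ ^ 3) θ := by
  have huc : Continuous u := continuous_iff_continuousAt.2 fun θ => (hu θ).continuousAt
  obtain ⟨M, hM⟩ := (isCompact_Icc (a := (0 : ℝ)) (b := 2 * Real.pi)).exists_bound_of_continuousOn
    (huc.sub (continuous_const (y := u 0))).continuousOn
  have hM0 : 0 ≤ M := (norm_nonneg _).trans (hM 0 ⟨le_rfl, by positivity⟩)
  obtain ⟨ε, hε, H⟩ := abel_exists Ah1 Ah2 hAh1 hAh2 (u 0) (M + 1) (by linarith)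
  refine ⟨ε, hε, fun ρ hρ => ?_⟩
  obtain ⟨R, hR0, hR⟩ := H ρ hρ
  have hu2 : u (2 * Real.pi) = u 0 := by simpa using hup 0
  refine ⟨fun θ => R (u θ), hR0, ?_, fun θ hθ => ?_⟩
  · change R (u (2 * Real.pi)) = ρ
    rw [hu2, hR0]
  · have hb : |u θ - u 0| ≤ M := hM θ hθ
    rw [abs_le] at hb
    have hc := (hR (u θ) ⟨by linarith, by linarith⟩).comp θ (hu θ)
    refine hc.congr_deriv ?_
    rw [h1, h2]
    ring


/-- If the Abel equation `dr/dθ = Ã₁(θ) r² + Ã₂(θ) r³`, with `Ã₁, Ã₂` continuous and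
2π-periodic, satisfies the Composition Condition, then it has a center at `r = 0`. -/
theorem abel_composition_condition_center
    (A1 A2 : ℝ → ℝ) (hA1c : Continuous A1) (hA2c : Continuous A2)
    (hA1p : Function.Periodic A1 (2 * Real.pi)) (hA2p : Function.Periodic A2 (2 * Real.pi))
    (u du : ℝ → ℝ) (hu : ∀ θ, HasDerivAt u (du θ) θ) (hdu : Continuous du)
    (hup : Function.Periodic u (2 * Real.pi))
    (Ah1 Ah2 : ℝ → ℝ) (hAh1 : Continuous Ah1) (hAh2 : Continuous Ah2)
    (h1 : ∀ θ, A1 θ = du θ * Ah1 (u θ)) (h2 : ∀ θ, A2 θ = du θ * Ah2 (u θ)) :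
    HasCenterAtZero (fun θ r => A1 θ * r ^ 2 + A2 θ * r ^ 3) := by
  obtain ⟨ε, hε, H⟩ :=
    abel_composition_condition_exists A1 A2 u du hu hup Ah1 Ah2 hAh1 hAh2 h1 h2
  refine ⟨ε, hε, fun r hr0 hr => ?_⟩
  obtain ⟨s, hs0, hs2, hs⟩ := H (r 0) hr0
  have := abel_unique A1 A2 hA1c hA2c (2 * Real.pi) r s hr hs hs0.symm
    (2 * Real.pi) ⟨by positivity, le_rfl⟩
  rw [this, hs2]
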